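/- Let 1 ≤ p ≤ ∞, let n, m ≥ 1, let u : M_n → M_m be a linear map, and let a ∈ M_n ⊗ M_m. Then |T((u ⊗ id_{M_m})(a))| ≤ ρ_p(a) · ‖u‖_r, where ‖u‖_r is the regular norm of u relative to p. (The claim established in the proof of Theorem 3.2.) -/

import Mathlib

open scoped Kronecker ENNReal Classical ComplexOrder
open Matrix

noncomputable section

/-- The operator norm (`S_∞` norm) of a complex matrix, acting on Euclidean space. -/
def opNorm {ι : Type} [Fintype ι] [DecidableEq ι] (a : Matrix ι ι ℂ) : ℝ :=
  ‖LinearMap.toContinuousLinearMap (Matrix.toEuclideanLin a)‖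

/-- The Schatten `p`-norm of a complex matrix: the `ℓ^p` norm of its singular values
(the square roots of the eigenvalues of `aᴴ * a`); for `p = ∞` it is the operator norm. -/
def schattenNorm {ι : Type} [Fintype ι] [DecidableEq ι] (p : ℝ≥0∞) (a : Matrix ι ι ℂ) : ℝ :=
  if p = ∞ then opNorm a
  else (∑ i, Real.sqrt ((Matrix.posSemidef_conjTranspose_mul_self a).isHermitian.eigenvalues i) ^ p.toReal)
      ^ (1 / p.toReal)

/-- Pisier's vector-valued Schatten norm `‖x‖_{S_p^N[M_n]}` on `M_N ⊗ M_n`: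
the infimum of `‖a‖_{S_{2p}} ‖y‖_{S_∞} ‖b‖_{S_{2p}}` over factorizations
`x = (a ⊗ 1) · y · (b ⊗ 1)`. -/
def pisierNorm (p : ℝ≥0∞) {N n : ℕ} (x : Matrix (Fin N × Fin n) (Fin N × Fin n) ℂ) : ℝ :=
  sInf { r | ∃ (a b : Matrix (Fin N) (Fin N) ℂ)
      (y : Matrix (Fin N × Fin n) (Fin N × Fin n) ℂ),
      x = (a ⊗ₖ (1 : Matrix (Fin n) (Fin n) ℂ)) * y * (b ⊗ₖ (1 : Matrix (Fin n) (Fin n) ℂ)) ∧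
      r = schattenNorm (2 * p) a * opNorm y * schattenNorm (2 * p) b }

/-- The amplification `u ⊗ id_{M_n} : M_N ⊗ M_n → M_m ⊗ M_n` of a map `u : M_N → M_m`,
acting as `u` on each `M_n`-block entry. -/
def amp {N m n : ℕ} (u : Matrix (Fin N) (Fin N) ℂ → Matrix (Fin m) (Fin m) ℂ)
    (x : Matrix (Fin N × Fin n) (Fin N × Fin n) ℂ) : Matrix (Fin m × Fin n) (Fin m × Fin n) ℂ :=
  Matrix.of fun ik jl => u (Matrix.of fun i j => x (i, ik.2) (j, jl.2)) ik.1 jl.1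

/-- The amplification `id_{M_n} ⊗ u : M_n ⊗ M_N → M_n ⊗ M_m` of a map `u : M_N → M_m`. -/
def ampLeft {n N m : ℕ} (u : Matrix (Fin N) (Fin N) ℂ → Matrix (Fin m) (Fin m) ℂ)
    (x : Matrix (Fin n × Fin N) (Fin n × Fin N) ℂ) : Matrix (Fin n × Fin m) (Fin n × Fin m) ℂ :=
  Matrix.of fun ki lj => u (Matrix.of fun i j => x (ki.1, i) (lj.1, j)) ki.2 lj.2

/-- The trace pairing `T : M_k ⊗ M_k → ℂ`, with `T(a ⊗ b) = tr(ᵗa·b)`; writing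
`z` as a `k×k` matrix of blocks `z_{ij} ∈ M_k`, `T(z) = Σ_{i,j} (z_{ij})_{ij}`. -/
def tracePair {k : ℕ} (z : Matrix (Fin k × Fin k) (Fin k × Fin k) ℂ) : ℂ :=
  ∑ i : Fin k, ∑ j : Fin k, z (i, i) (j, j)

/-- A map `u : M_N → M_m` is completely positive if all its amplifications
`id_{M_n} ⊗ u` preserve positive semidefiniteness. -/
def CompletelyPositive {N m : ℕ}
    (u : Matrix (Fin N) (Fin N) ℂ → Matrix (Fin m) (Fin m) ℂ) : Prop :=
  ∀ (n : ℕ) (x : Matrix (Fin n × Fin N) (Fin n × Fin N) ℂ),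
    x.PosSemidef → (ampLeft u x).PosSemidef

/-- The regular norm (relative to `p`) of `u : M_N → M_m`: the supremum in `[0,∞]`
over `n ≥ 1` of the norms of the amplifications `u ⊗ id_{M_n}` from
`(M_N ⊗ M_n, ‖·‖_{S_p^N[M_n]})` to `(M_m ⊗ M_n, ‖·‖_{S_p^m[M_n]})`. -/
def regNorm (p : ℝ≥0∞) {N m : ℕ}
    (u : Matrix (Fin N) (Fin N) ℂ → Matrix (Fin m) (Fin m) ℂ) : ℝ≥0∞ :=
  ⨆ (n : ℕ) (x : Matrix (Fin N × Fin (n + 1)) (Fin N × Fin (n + 1)) ℂ)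
    (_ : pisierNorm p x ≤ 1), ENNReal.ofReal (pisierNorm p (amp u x))

/-- Pisier's norm `ρ_p` on `M_n ⊗ M_m` (with `q` the conjugate exponent `p'`):
the infimum of `‖γ‖_{S_{2p}} ‖α‖_{S_{2p'}} ‖g‖_{S_∞} ‖δ‖_{S_{2p}} ‖β‖_{S_{2p'}}`
over factorizations `a = (γ ⊗ α) · g · (δ ⊗ β)`. -/
def rho (p q : ℝ≥0∞) {n m : ℕ} (a : Matrix (Fin n × Fin m) (Fin n × Fin m) ℂ) : ℝ :=
  sInf { r | ∃ (γ δ : Matrix (Fin n) (Fin n) ℂ) (α β : Matrix (Fin m) (Fin m) ℂ)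
      (g : Matrix (Fin n × Fin m) (Fin n × Fin m) ℂ),
      a = (γ ⊗ₖ α) * g * (δ ⊗ₖ β) ∧
      r = schattenNorm (2 * p) γ * schattenNorm (2 * q) α * opNorm g *
          schattenNorm (2 * p) δ * schattenNorm (2 * q) β }

/-- The amplification `u ⊗ id_{M_n}` of a map `u` defined only on a subspace `S ⊆ M_N`,
applied to an element of `M_N ⊗ M_n` all of whose `M_N`-valued block entries lie in `S`. -/
def ampOn {N m n : ℕ} (S : Submodule ℂ (Matrix (Fin N) (Fin N) ℂ))
    (u : S →ₗ[ℂ] Matrix (Fin m) (Fin m) ℂ)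
    (x : Matrix (Fin N × Fin n) (Fin N × Fin n) ℂ)
    (h : ∀ k l : Fin n, (Matrix.of fun i j => x (i, k) (j, l)) ∈ S) :
    Matrix (Fin m × Fin n) (Fin m × Fin n) ℂ :=
  Matrix.of fun ik jl => u ⟨Matrix.of fun i j => x (i, ik.2) (j, jl.2), h ik.2 jl.2⟩ ik.1 jl.1

end

/-!
For a factorization `a = (γ ⊗ α) g (δ ⊗ β)` put `x = (γ ⊗ 1) g (δ ⊗ 1)`. Since `u ⊗ id` commutes
with multiplication by `1 ⊗ α` and `1 ⊗ β`,
`T((u ⊗ id)(a)) = T((1 ⊗ α) (u ⊗ id)(x) (1 ⊗ β))`, and the regular norm controls `(u ⊗ id)(x)`.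
So it suffices to bound `T((c ⊗ α) z (d ⊗ β))`. As `T(z) = ⟨ξ, z ξ⟩` for the vector
`ξ = ∑ i, e_i ⊗ e_i`, this reduces to the norm of `(d ⊗ β) ξ`, which is the Hilbert–Schmidt norm of
`β dᵀ`, hence to Hölder's inequality for Schatten norms. In eigenbases,
`tr(A B) = ⟨λ(A), M λ(B)⟩` with `M` doubly stochastic, so by Birkhoff's theorem `M` is an
`ℓ^p`-contraction and the scalar Hölder inequality applies.

If `‖u‖_r = ∞` and `ρ_p(a) = 0`, the right-hand side is `0 * ∞ = 0`; but `ρ_p` dominates the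
operator norm, so `a = 0` in that case.
-/

open WithLp
open scoped Matrix.Norms.L2Operator

section Hoelder

variable {ι : Type*} [Fintype ι]

lemma dotProduct_le_norm_toLp_mul_norm_toLp (p q : ℝ≥0∞) [p.HolderConjugate q] (x y : ι → ℝ) :
    x ⬝ᵥ y ≤ ‖toLp p x‖ * ‖toLp q y‖ := by
  have : Fact (1 ≤ p) := ⟨ENNReal.HolderConjugate.one_le p q⟩
  have : Fact (1 ≤ q) := ⟨ENNReal.HolderConjugate.one_le q p⟩
  let e := (lpPiLpₗᵢ (p := p) (fun _ : ι => ℝ) ℝ).symm (toLp p x)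
  let f := (lpPiLpₗᵢ (p := q) (fun _ : ι => ℝ) ℝ).symm (toLp q y)
  let Φ := lp.dualPairing p q (K := 1) (fun _ : ι => ContinuousLinearMap.mul ℝ ℝ) (by simp)
  have hΦ : Φ e f = x ⬝ᵥ y := (lp.dualPairing_apply _ _ _ _).trans (tsum_fintype _)
  calc x ⬝ᵥ y ≤ ‖Φ e f‖ := hΦ ▸ Real.le_norm_self _
    _ ≤ ‖Φ‖ * ‖e‖ * ‖f‖ := Φ.le_opNorm₂ e f
    _ ≤ 1 * ‖e‖ * ‖f‖ := by gcongr; exact lp.norm_dualPairing _ _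
    _ = ‖toLp p x‖ * ‖toLp q y‖ := by simp [e, f]

variable [DecidableEq ι]

lemma norm_toLp_mulVec_le_of_mem_doublyStochastic (p : ℝ≥0∞) [Fact (1 ≤ p)] {M : Matrix ι ι ℝ}
    (hM : M ∈ doublyStochastic ℝ ι) (x : ι → ℝ) : ‖toLp p (M *ᵥ x)‖ ≤ ‖toLp p x‖ := by
  let applyTo : Matrix ι ι ℝ →ₗ[ℝ] PiLp p (fun _ : ι => ℝ) :=
    (WithLp.linearEquiv p ℝ (ι → ℝ)).symm.toLinearMap ∘ₗ (mulVecBilin ℝ ℝ).flip x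
  rw [← SetLike.mem_coe, doublyStochastic_eq_convexHull_permMatrix] at hM
  obtain ⟨_, ⟨σ, rfl⟩, hσ⟩ :=
    (convexOn_univ_norm.comp_linearMap applyTo).exists_ge_of_mem_convexHull (by simp) hM
  have hperm : applyTo (σ.permMatrix ℝ) =
      LinearIsometryEquiv.piLpCongrLeft p ℝ ℝ σ.symm (toLp p x) := by
    ext i
    simp [applyTo, permMatrix_mulVec]
  refine hσ.trans_eq ?_
  rw [Function.comp_apply, hperm, LinearIsometryEquiv.norm_map]

end Hoelder

section Eigenvalues

variable {ι 𝕜 : Type*} [Fintype ι] [DecidableEq ι] [RCLike 𝕜]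

lemma of_norm_sq_mem_doublyStochastic (U : unitaryGroup ι 𝕜) :
    of (fun i j => ‖(U : Matrix ι ι 𝕜) i j‖ ^ 2) ∈ doublyStochastic ℝ ι := by
  have hrow : (U : Matrix ι ι 𝕜) * star (U : Matrix ι ι 𝕜) = 1 := Unitary.coe_mul_star_self U
  have hcol : star (U : Matrix ι ι 𝕜) * (U : Matrix ι ι 𝕜) = 1 := Unitary.coe_star_mul_self U
  refine mem_doublyStochastic_iff_sum.2 ⟨fun i j => sq_nonneg _, fun i => ?_, fun j => ?_⟩
  · have h := congrFun₂ hrow i i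
    simp only [mul_apply, star_apply, one_apply_eq, RCLike.star_def, RCLike.mul_conj] at h
    exact_mod_cast h
  · have h := congrFun₂ hcol j j
    simp only [mul_apply, star_apply, one_apply_eq, RCLike.star_def, RCLike.conj_mul] at h
    exact_mod_cast h

lemma trace_diagonal_mul_mul_diagonal_mul_conjTranspose (x y : ι → ℝ) (W : Matrix ι ι 𝕜) :
    (diagonal (RCLike.ofReal ∘ x) * W * (diagonal (RCLike.ofReal ∘ y) * Wᴴ)).trace =
      ((x ⬝ᵥ of (fun i j => ‖W i j‖ ^ 2) *ᵥ y : ℝ) : 𝕜) := by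
  simp only [trace, diag_apply, mul_apply (M := _ * W), diagonal_mul, conjTranspose_apply,
    dotProduct, mulVec, Finset.mul_sum, of_apply, Function.comp_apply, RCLike.star_def,
    map_sum, RCLike.ofReal_mul, RCLike.ofReal_pow, ← RCLike.mul_conj]
  refine Finset.sum_congr rfl fun i _ => Finset.sum_congr rfl fun j _ => ?_
  ring

lemma trace_mul_eq_dotProduct_eigenvalues {A B : Matrix ι ι 𝕜} (hA : A.IsHermitian)
    (hB : B.IsHermitian) :
    (A * B).trace = ((hA.eigenvalues ⬝ᵥ of (fun i j =>
      ‖((star hA.eigenvectorUnitary * hB.eigenvectorUnitary : unitaryGroup ι 𝕜) :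
        Matrix ι ι 𝕜) i j‖ ^ 2) *ᵥ hB.eigenvalues : ℝ) : 𝕜) := by
  set U := hA.eigenvectorUnitary
  set V := hB.eigenvectorUnitary
  rw [← trace_diagonal_mul_mul_diagonal_mul_conjTranspose]
  conv_lhs => rw [hA.spectral_theorem, hB.spectral_theorem]
  simp only [Unitary.conjStarAlgAut_apply]
  rw [mul_assoc, mul_assoc, trace_mul_comm]
  simp [U, V, mul_assoc, ← star_eq_conjTranspose]

lemma re_trace_mul_le_norm_toLp_eigenvalues (p q : ℝ≥0∞) [p.HolderConjugate q]
    {A B : Matrix ι ι 𝕜} (hA : A.IsHermitian) (hB : B.IsHermitian) :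
    RCLike.re (A * B).trace ≤ ‖toLp p hA.eigenvalues‖ * ‖toLp q hB.eigenvalues‖ := by
  have : Fact (1 ≤ p) := ⟨ENNReal.HolderConjugate.one_le p q⟩
  have : Fact (1 ≤ q) := ⟨ENNReal.HolderConjugate.one_le q p⟩
  rw [trace_mul_eq_dotProduct_eigenvalues hA hB, RCLike.ofReal_re]
  refine (dotProduct_le_norm_toLp_mul_norm_toLp p q _ _).trans ?_
  gcongr
  exact norm_toLp_mulVec_le_of_mem_doublyStochastic q (of_norm_sq_mem_doublyStochastic
    (star hA.eigenvectorUnitary * hB.eigenvectorUnitary)) hB.eigenvalues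

lemma l2_opNorm_eq_norm_eigenvalues {A : Matrix ι ι 𝕜} (hA : A.IsHermitian) :
    ‖A‖ = ‖hA.eigenvalues‖ := by
  conv_lhs => rw [hA.spectral_theorem]
  rw [Unitary.conjStarAlgAut_apply, ← Unitary.coe_star, CStarRing.norm_mul_coe_unitary,
    CStarRing.norm_coe_unitary_mul, l2_opNorm_diagonal]
  simp [Pi.norm_def]

end Eigenvalues

section Schatten

lemma norm_toLp_vec_sq {ι κ 𝕜 : Type*} [Fintype ι] [Fintype κ] [RCLike 𝕜] (a : Matrix ι κ 𝕜) :
    ‖toLp 2 (vec a)‖ ^ 2 = RCLike.re (aᴴ * a).trace := by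
  rw [← star_vec_dotProduct_vec, ← inner_self_eq_norm_sq (𝕜 := 𝕜),
    EuclideanSpace.inner_eq_star_dotProduct, dotProduct_comm]

variable {ι : Type} [Fintype ι] [DecidableEq ι]

/-- The eigenvalues of `aᴴ * a`, i.e. the squares of the singular values of `a`. The Schatten norm
of exponent `2 * p` is the square root of their `ℓ^p` norm. -/
noncomputable def singularValuesSq (a : Matrix ι ι ℂ) : ι → ℝ :=
  (posSemidef_conjTranspose_mul_self a).isHermitian.eigenvalues

lemma singularValuesSq_nonneg (a : Matrix ι ι ℂ) (i : ι) : 0 ≤ singularValuesSq a i :=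
  (posSemidef_conjTranspose_mul_self a).eigenvalues_nonneg i

lemma singularValuesSq_conjTranspose (a : Matrix ι ι ℂ) :
    singularValuesSq aᴴ = singularValuesSq a := by
  rw [singularValuesSq, singularValuesSq, IsHermitian.eigenvalues_eq_eigenvalues_iff,
    conjTranspose_conjTranspose, charpoly_mul_comm]

lemma singularValuesSq_transpose (a : Matrix ι ι ℂ) :
    singularValuesSq aᵀ = singularValuesSq a := by
  rw [← singularValuesSq_conjTranspose a, singularValuesSq, singularValuesSq,
    IsHermitian.eigenvalues_eq_eigenvalues_iff, ← charpoly_transpose, transpose_mul,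
    conjTranspose_conjTranspose]
  rfl

lemma opNorm_eq_l2_opNorm (a : Matrix ι ι ℂ) : opNorm a = ‖a‖ := rfl

lemma opNorm_sq (a : Matrix ι ι ℂ) : opNorm a ^ 2 = ‖singularValuesSq a‖ := by
  rw [singularValuesSq, ← l2_opNorm_eq_norm_eigenvalues, l2_opNorm_conjTranspose_mul_self, sq,
    opNorm_eq_l2_opNorm]

lemma opNorm_nonneg (a : Matrix ι ι ℂ) : 0 ≤ opNorm a := norm_nonneg _

lemma schattenNorm_nonneg (p : ℝ≥0∞) (a : Matrix ι ι ℂ) : 0 ≤ schattenNorm p a := by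
  unfold schattenNorm
  split_ifs
  · exact opNorm_nonneg a
  · positivity

lemma schattenNorm_two_mul_sq {p : ℝ≥0∞} (hp : p ≠ 0) (a : Matrix ι ι ℂ) :
    schattenNorm (2 * p) a ^ 2 = ‖toLp p (singularValuesSq a)‖ := by
  rcases eq_or_ne p ∞ with rfl | hp'
  · rw [schattenNorm, if_pos (by simp), opNorm_sq, PiLp.norm_toLp]
  have hpos : 0 < p.toReal := ENNReal.toReal_pos hp hp'
  rw [schattenNorm, if_neg (ENNReal.mul_ne_top ENNReal.ofNat_ne_top hp'), PiLp.norm_eq_sum hpos,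
    ← Real.rpow_natCast, ← Real.rpow_mul (by positivity), ENNReal.toReal_mul, ENNReal.toReal_ofNat]
  congr 1
  · refine Finset.sum_congr rfl fun i _ => ?_
    rw [Real.rpow_mul (Real.sqrt_nonneg _), Real.rpow_two,
      Real.norm_of_nonneg (singularValuesSq_nonneg a i)]
    exact congrArg (· ^ _) (Real.sq_sqrt (singularValuesSq_nonneg a i))
  · push_cast
    field_simp

lemma schattenNorm_congr {a b : Matrix ι ι ℂ} (h : singularValuesSq a = singularValuesSq b)
    (p : ℝ≥0∞) : schattenNorm p a = schattenNorm p b := by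
  have hop : opNorm a = opNorm b := by
    rw [← sq_eq_sq₀ (opNorm_nonneg a) (opNorm_nonneg b), opNorm_sq, opNorm_sq, h]
  rw [schattenNorm, schattenNorm, hop, ← singularValuesSq, ← singularValuesSq, h]

lemma schattenNorm_conjTranspose (p : ℝ≥0∞) (a : Matrix ι ι ℂ) :
    schattenNorm p aᴴ = schattenNorm p a :=
  schattenNorm_congr (singularValuesSq_conjTranspose a) p

lemma schattenNorm_transpose (p : ℝ≥0∞) (a : Matrix ι ι ℂ) :
    schattenNorm p aᵀ = schattenNorm p a :=
  schattenNorm_congr (singularValuesSq_transpose a) p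

lemma opNorm_le_schattenNorm_two_mul (p : ℝ≥0∞) [Fact (1 ≤ p)] (a : Matrix ι ι ℂ) :
    opNorm a ≤ schattenNorm (2 * p) a := by
  rw [← sq_le_sq₀ (opNorm_nonneg a) (schattenNorm_nonneg _ a), opNorm_sq,
    schattenNorm_two_mul_sq (zero_lt_one.trans_le Fact.out).ne']
  exact (pi_norm_le_iff_of_nonneg (norm_nonneg _)).2 fun i =>
    PiLp.norm_apply_le (toLp p (singularValuesSq a)) i

lemma norm_toLp_vec_mul_le (p q : ℝ≥0∞) [p.HolderConjugate q] (a b : Matrix ι ι ℂ) :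
    ‖toLp 2 (vec (a * b))‖ ≤ schattenNorm (2 * p) a * schattenNorm (2 * q) b := by
  have hb : singularValuesSq bᴴ = (posSemidef_self_mul_conjTranspose b).isHermitian.eigenvalues :=
    (IsHermitian.eigenvalues_eq_eigenvalues_iff _ _).2 (by rw [conjTranspose_conjTranspose])
  refine le_of_sq_le_sq ?_ (mul_nonneg (schattenNorm_nonneg _ _) (schattenNorm_nonneg _ _))
  calc ‖toLp 2 (vec (a * b))‖ ^ 2 = RCLike.re (aᴴ * a * (b * bᴴ)).trace := by
        rw [norm_toLp_vec_sq, conjTranspose_mul, mul_assoc, trace_mul_comm]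
        simp only [mul_assoc]
    _ ≤ ‖toLp p (singularValuesSq a)‖ * ‖toLp q (singularValuesSq bᴴ)‖ :=
        hb ▸ re_trace_mul_le_norm_toLp_eigenvalues p q
          (posSemidef_conjTranspose_mul_self a).isHermitian
          (posSemidef_self_mul_conjTranspose b).isHermitian
    _ = (schattenNorm (2 * p) a * schattenNorm (2 * q) b) ^ 2 := by
        rw [mul_pow, schattenNorm_two_mul_sq (ENNReal.HolderConjugate.ne_zero p q),
          schattenNorm_two_mul_sq (ENNReal.HolderConjugate.ne_zero q p),
          singularValuesSq_conjTranspose]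

lemma norm_star_dotProduct_mulVec_le (g : Matrix ι ι ℂ) (v w : ι → ℂ) :
    ‖star v ⬝ᵥ (g *ᵥ w)‖ ≤ ‖toLp 2 v‖ * opNorm g * ‖toLp 2 w‖ := by
  calc ‖star v ⬝ᵥ (g *ᵥ w)‖ = ‖inner ℂ (toLp 2 v) (toLp 2 (g *ᵥ w))‖ := by
        rw [EuclideanSpace.inner_eq_star_dotProduct, dotProduct_comm]
    _ ≤ ‖toLp 2 v‖ * ‖toLp 2 (g *ᵥ w)‖ := norm_inner_le_norm _ _
    _ ≤ ‖toLp 2 v‖ * (opNorm g * ‖toLp 2 w‖) := by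
        gcongr
        exact l2_opNorm_mulVec g (toLp 2 w)
    _ = ‖toLp 2 v‖ * opNorm g * ‖toLp 2 w‖ := (mul_assoc _ _ _).symm

end Schatten

section TracePairing

variable {k : ℕ}

lemma tracePair_eq_dotProduct (z : Matrix (Fin k × Fin k) (Fin k × Fin k) ℂ) :
    tracePair z = star (vec 1) ⬝ᵥ (z *ᵥ vec 1) := by
  simp [tracePair, dotProduct, mulVec, Fintype.sum_prod_type, one_apply]

lemma norm_toLp_kronecker_mulVec_vec_one_le (p q : ℝ≥0∞) [p.HolderConjugate q]
    (d b : Matrix (Fin k) (Fin k) ℂ) :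
    ‖toLp 2 ((d ⊗ₖ b) *ᵥ vec 1)‖ ≤ schattenNorm (2 * p) d * schattenNorm (2 * q) b := by
  rw [kronecker_mulVec_vec, mul_one, mul_comm (schattenNorm _ _), ← schattenNorm_transpose _ d]
  exact norm_toLp_vec_mul_le q p b dᵀ

lemma norm_tracePair_mul_mul_le (p q : ℝ≥0∞) [p.HolderConjugate q]
    (c α d β : Matrix (Fin k) (Fin k) ℂ) (z : Matrix (Fin k × Fin k) (Fin k × Fin k) ℂ) :
    ‖tracePair ((c ⊗ₖ α) * z * (d ⊗ₖ β))‖ ≤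
      schattenNorm (2 * p) c * opNorm z * schattenNorm (2 * p) d *
        (schattenNorm (2 * q) α * schattenNorm (2 * q) β) := by
  have hleft : star ((cᴴ ⊗ₖ αᴴ) *ᵥ vec 1) = star (vec 1) ᵥ* (c ⊗ₖ α) := by
    rw [star_mulVec, ← conjTranspose_kronecker, conjTranspose_conjTranspose]
  have hc := norm_toLp_kronecker_mulVec_vec_one_le p q cᴴ αᴴ
  rw [schattenNorm_conjTranspose, schattenNorm_conjTranspose] at hc
  calc ‖tracePair ((c ⊗ₖ α) * z * (d ⊗ₖ β))‖
      = ‖star ((cᴴ ⊗ₖ αᴴ) *ᵥ vec 1) ⬝ᵥ (z *ᵥ ((d ⊗ₖ β) *ᵥ vec 1))‖ := by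
        rw [tracePair_eq_dotProduct, hleft, ← dotProduct_mulVec, mulVec_mulVec, mulVec_mulVec]
    _ ≤ ‖toLp 2 ((cᴴ ⊗ₖ αᴴ) *ᵥ vec 1)‖ * opNorm z * ‖toLp 2 ((d ⊗ₖ β) *ᵥ vec 1)‖ :=
        norm_star_dotProduct_mulVec_le _ _ _
    _ ≤ schattenNorm (2 * p) c * schattenNorm (2 * q) α * opNorm z *
        (schattenNorm (2 * p) d * schattenNorm (2 * q) β) := by
        have := opNorm_nonneg z
        have := (norm_nonneg _).trans hc
        gcongr
        exact norm_toLp_kronecker_mulVec_vec_one_le p q d β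
    _ = _ := by ring

end TracePairing

section Infimum

lemma le_csInf_mul {S : Set ℝ} (hS : S.Nonempty) {t k : ℝ} (hk : 0 ≤ k)
    (h : ∀ r ∈ S, t ≤ r * k) : t ≤ sInf S * k := by
  rw [mul_comm, ← smul_eq_mul, ← Real.sInf_smul_of_nonneg hk]
  refine le_csInf (hS.image _) ?_
  rintro _ ⟨r, hr, rfl⟩
  exact (h r hr).trans_eq (mul_comm r k)

variable {p q : ℝ≥0∞} {N n m : ℕ}

lemma le_pisierNorm_mul {x : Matrix (Fin N × Fin n) (Fin N × Fin n) ℂ} {t k : ℝ} (hk : 0 ≤ k)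
    (h : ∀ (a b : Matrix (Fin N) (Fin N) ℂ) (y : Matrix (Fin N × Fin n) (Fin N × Fin n) ℂ),
      x = (a ⊗ₖ (1 : Matrix (Fin n) (Fin n) ℂ)) * y * (b ⊗ₖ (1 : Matrix (Fin n) (Fin n) ℂ)) →
      t ≤ schattenNorm (2 * p) a * opNorm y * schattenNorm (2 * p) b * k) :
    t ≤ pisierNorm p x * k := by
  unfold pisierNorm
  refine le_csInf_mul ?_ hk ?_
  · exact ⟨_, 1, 1, x, by simp, rfl⟩
  rintro r ⟨a, b, y, hx, rfl⟩
  exact h a b y hx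

lemma le_rho_mul {a : Matrix (Fin n × Fin m) (Fin n × Fin m) ℂ} {t k : ℝ} (hk : 0 ≤ k)
    (h : ∀ (γ δ : Matrix (Fin n) (Fin n) ℂ) (α β : Matrix (Fin m) (Fin m) ℂ)
      (g : Matrix (Fin n × Fin m) (Fin n × Fin m) ℂ), a = (γ ⊗ₖ α) * g * (δ ⊗ₖ β) →
      t ≤ schattenNorm (2 * p) γ * schattenNorm (2 * q) α * opNorm g *
          schattenNorm (2 * p) δ * schattenNorm (2 * q) β * k) :
    t ≤ rho p q a * k := by
  unfold rho
  refine le_csInf_mul ?_ hk ?_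
  · exact ⟨_, 1, 1, 1, 1, a, by simp, rfl⟩
  rintro r ⟨γ, δ, α, β, g, ha, rfl⟩
  exact h γ δ α β g ha

lemma pisierNorm_mul_mul_le (a b : Matrix (Fin N) (Fin N) ℂ)
    (y : Matrix (Fin N × Fin n) (Fin N × Fin n) ℂ) :
    pisierNorm p ((a ⊗ₖ (1 : Matrix (Fin n) (Fin n) ℂ)) * y *
        (b ⊗ₖ (1 : Matrix (Fin n) (Fin n) ℂ))) ≤
      schattenNorm (2 * p) a * opNorm y * schattenNorm (2 * p) b := by
  refine csInf_le ⟨0, ?_⟩ ⟨a, b, y, rfl, rfl⟩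
  rintro r ⟨a, b, y, -, rfl⟩
  exact mul_nonneg (mul_nonneg (schattenNorm_nonneg _ _) (opNorm_nonneg _))
    (schattenNorm_nonneg _ _)

lemma pisierNorm_nonneg (x : Matrix (Fin N × Fin n) (Fin N × Fin n) ℂ) : 0 ≤ pisierNorm p x := by
  refine Real.sInf_nonneg ?_
  rintro r ⟨a, b, y, -, rfl⟩
  exact mul_nonneg (mul_nonneg (schattenNorm_nonneg _ _) (opNorm_nonneg _))
    (schattenNorm_nonneg _ _)

lemma pisierNorm_smul_le (c : ℂ) (x : Matrix (Fin N × Fin n) (Fin N × Fin n) ℂ) :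
    pisierNorm p (c • x) ≤ pisierNorm p x * ‖c‖ := by
  refine le_pisierNorm_mul (norm_nonneg c) ?_
  rintro a b y rfl
  rw [← smul_mul_assoc, ← mul_smul_comm]
  refine (pisierNorm_mul_mul_le a b (c • y)).trans_eq ?_
  rw [opNorm_eq_l2_opNorm, norm_smul, opNorm_eq_l2_opNorm]
  ring

end Infimum

section Kronecker

variable {ι κ : Type*} [Fintype ι] [Fintype κ] [DecidableEq ι] [DecidableEq κ]

lemma l2_opNorm_kronecker_one_le (a : Matrix ι ι ℂ) : ‖a ⊗ₖ (1 : Matrix κ κ ℂ)‖ ≤ ‖a‖ := by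
  let kroneckerOne : Matrix ι ι ℂ →⋆ₙₐ[ℂ] Matrix (ι × κ) (ι × κ) ℂ :=
    { toFun := fun a => a ⊗ₖ 1
      map_smul' := fun c a => smul_kronecker c a 1
      map_zero' := zero_kronecker 1
      map_add' := fun a b => add_kronecker a b 1
      map_mul' := fun a b => by simpa using mul_kronecker_mul a b (1 : Matrix κ κ ℂ) 1
      map_star' := fun a => by simp [star_eq_conjTranspose, conjTranspose_kronecker] }
  exact NonUnitalStarAlgHom.norm_apply_le kroneckerOne a

lemma l2_opNorm_one_kronecker_le (b : Matrix κ κ ℂ) : ‖(1 : Matrix ι ι ℂ) ⊗ₖ b‖ ≤ ‖b‖ := by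
  let oneKronecker : Matrix κ κ ℂ →⋆ₙₐ[ℂ] Matrix (ι × κ) (ι × κ) ℂ :=
    { toFun := fun b => 1 ⊗ₖ b
      map_smul' := fun c b => kronecker_smul c 1 b
      map_zero' := kronecker_zero 1
      map_add' := fun a b => kronecker_add 1 a b
      map_mul' := fun a b => by simpa using mul_kronecker_mul (1 : Matrix ι ι ℂ) 1 a b
      map_star' := fun a => by simp [star_eq_conjTranspose, conjTranspose_kronecker] }
  exact NonUnitalStarAlgHom.norm_apply_le oneKronecker b

lemma l2_opNorm_kronecker_le (a : Matrix ι ι ℂ) (b : Matrix κ κ ℂ) : ‖a ⊗ₖ b‖ ≤ ‖a‖ * ‖b‖ :=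
  calc ‖a ⊗ₖ b‖ = ‖(a ⊗ₖ (1 : Matrix κ κ ℂ)) * ((1 : Matrix ι ι ℂ) ⊗ₖ b)‖ := by
        rw [← mul_kronecker_mul, mul_one, one_mul]
    _ ≤ ‖a ⊗ₖ (1 : Matrix κ κ ℂ)‖ * ‖(1 : Matrix ι ι ℂ) ⊗ₖ b‖ := norm_mul_le _ _
    _ ≤ ‖a‖ * ‖b‖ :=
        mul_le_mul (l2_opNorm_kronecker_one_le a) (l2_opNorm_one_kronecker_le b) (norm_nonneg _)
          (norm_nonneg _)

lemma l2_opNorm_kronecker_le_schattenNorm (p q : ℝ≥0∞) [p.HolderConjugate q] {ι κ : Type}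
    [Fintype ι] [Fintype κ] [DecidableEq ι] [DecidableEq κ] (γ : Matrix ι ι ℂ) (α : Matrix κ κ ℂ) :
    ‖γ ⊗ₖ α‖ ≤ schattenNorm (2 * p) γ * schattenNorm (2 * q) α := by
  have : Fact (1 ≤ p) := ⟨ENNReal.HolderConjugate.one_le p q⟩
  have : Fact (1 ≤ q) := ⟨ENNReal.HolderConjugate.one_le q p⟩
  exact (l2_opNorm_kronecker_le γ α).trans (mul_le_mul (opNorm_le_schattenNorm_two_mul p γ)
    (opNorm_le_schattenNorm_two_mul q α) (norm_nonneg α) (schattenNorm_nonneg _ γ))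

end Kronecker

section Rho

variable {n m : ℕ} (p q : ℝ≥0∞) [p.HolderConjugate q]

lemma opNorm_le_rho (a : Matrix (Fin n × Fin m) (Fin n × Fin m) ℂ) : opNorm a ≤ rho p q a := by
  rw [← mul_one (rho p q a)]
  refine le_rho_mul zero_le_one ?_
  rintro γ δ α β g rfl
  rw [opNorm_eq_l2_opNorm, opNorm_eq_l2_opNorm g]
  calc ‖(γ ⊗ₖ α) * g * (δ ⊗ₖ β)‖ ≤ ‖γ ⊗ₖ α‖ * ‖g‖ * ‖δ ⊗ₖ β‖ := norm_mul₃_le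
    _ ≤ schattenNorm (2 * p) γ * schattenNorm (2 * q) α * ‖g‖ *
        (schattenNorm (2 * p) δ * schattenNorm (2 * q) β) := by
        have hγα := l2_opNorm_kronecker_le_schattenNorm p q γ α
        have := (norm_nonneg _).trans hγα
        gcongr
        exact l2_opNorm_kronecker_le_schattenNorm p q δ β
    _ = _ := by ring

lemma rho_nonneg (a : Matrix (Fin n × Fin m) (Fin n × Fin m) ℂ) : 0 ≤ rho p q a :=
  (opNorm_nonneg a).trans (opNorm_le_rho p q a)

variable {p q}

lemma eq_zero_of_rho_eq_zero {a : Matrix (Fin n × Fin m) (Fin n × Fin m) ℂ}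
    (ha : rho p q a = 0) : a = 0 := by
  rw [← norm_le_zero_iff, ← opNorm_eq_l2_opNorm, ← ha]
  exact opNorm_le_rho p q a

end Rho

section Amplification

lemma one_kronecker_mul_kronecker_one_mul {ι κ R : Type*} [Fintype ι] [Fintype κ] [DecidableEq ι]
    [DecidableEq κ] [CommSemiring R] (c d : Matrix ι ι R) (α β : Matrix κ κ R)
    (z : Matrix (ι × κ) (ι × κ) R) :
    ((1 : Matrix ι ι R) ⊗ₖ α) * ((c ⊗ₖ (1 : Matrix κ κ R)) * z * (d ⊗ₖ (1 : Matrix κ κ R))) *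
      ((1 : Matrix ι ι R) ⊗ₖ β) = (c ⊗ₖ α) * z * (d ⊗ₖ β) := by
  have hl : ((1 : Matrix ι ι R) ⊗ₖ α) * (c ⊗ₖ (1 : Matrix κ κ R)) = c ⊗ₖ α := by
    rw [← mul_kronecker_mul, one_mul, mul_one]
  have hr : (d ⊗ₖ (1 : Matrix κ κ R)) * ((1 : Matrix ι ι R) ⊗ₖ β) = d ⊗ₖ β := by
    rw [← mul_kronecker_mul, one_mul, mul_one]
  rw [← hl, ← hr]
  simp only [mul_assoc]

lemma norm_tracePair_one_kronecker_mul_mul_le (p q : ℝ≥0∞) [p.HolderConjugate q] {k : ℕ}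
    (α β : Matrix (Fin k) (Fin k) ℂ) (y : Matrix (Fin k × Fin k) (Fin k × Fin k) ℂ) :
    ‖tracePair (((1 : Matrix (Fin k) (Fin k) ℂ) ⊗ₖ α) * y *
        ((1 : Matrix (Fin k) (Fin k) ℂ) ⊗ₖ β))‖ ≤
      pisierNorm p y * (schattenNorm (2 * q) α * schattenNorm (2 * q) β) := by
  refine le_pisierNorm_mul (mul_nonneg (schattenNorm_nonneg _ _) (schattenNorm_nonneg _ _)) ?_
  rintro c d z rfl
  rw [one_kronecker_mul_kronecker_one_mul]
  exact norm_tracePair_mul_mul_le p q c α d β z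

lemma one_kronecker_mul_mul_apply {ι κ R : Type*} [Fintype ι] [Fintype κ] [DecidableEq ι]
    [CommSemiring R] (α β : Matrix κ κ R) (x : Matrix (ι × κ) (ι × κ) R) (I J : ι × κ) :
    (((1 : Matrix ι ι R) ⊗ₖ α) * x * ((1 : Matrix ι ι R) ⊗ₖ β)) I J =
      ∑ s, ∑ t, (α I.2 s * β t J.2) * x (I.1, s) (J.1, t) := by
  have hl (K : ι × κ) : (((1 : Matrix ι ι R) ⊗ₖ α) * x) I K = ∑ s, α I.2 s * x (I.1, s) K := by
    simp [mul_apply, Fintype.sum_prod_type, one_apply]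
  have hr (y : Matrix (ι × κ) (ι × κ) R) :
      (y * ((1 : Matrix ι ι R) ⊗ₖ β)) I J = ∑ t, y I (J.1, t) * β t J.2 := by
    simp [mul_apply, Fintype.sum_prod_type_right, one_apply]
  simp only [hr, hl, Finset.sum_mul]
  rw [Finset.sum_comm]
  refine Finset.sum_congr rfl fun s _ => Finset.sum_congr rfl fun t _ => ?_
  ring

variable {N m n : ℕ} (u : Matrix (Fin N) (Fin N) ℂ →ₗ[ℂ] Matrix (Fin m) (Fin m) ℂ)

lemma amp_one_kronecker_mul_mul (α β : Matrix (Fin n) (Fin n) ℂ)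
    (x : Matrix (Fin N × Fin n) (Fin N × Fin n) ℂ) :
    amp u (((1 : Matrix (Fin N) (Fin N) ℂ) ⊗ₖ α) * x * ((1 : Matrix (Fin N) (Fin N) ℂ) ⊗ₖ β)) =
      ((1 : Matrix (Fin m) (Fin m) ℂ) ⊗ₖ α) * amp u x * ((1 : Matrix (Fin m) (Fin m) ℂ) ⊗ₖ β) := by
  ext I J
  have hblock : (of fun i j => (((1 : Matrix (Fin N) (Fin N) ℂ) ⊗ₖ α) * x *
        ((1 : Matrix (Fin N) (Fin N) ℂ) ⊗ₖ β)) (i, I.2) (j, J.2)) =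
      ∑ s, ∑ t, (α I.2 s * β t J.2) • of fun i j => x (i, s) (j, t) := by
    ext i j
    simp [one_kronecker_mul_mul_apply, Matrix.sum_apply]
  rw [one_kronecker_mul_mul_apply, amp, of_apply, hblock]
  simp only [map_sum, map_smul, Matrix.sum_apply, Matrix.smul_apply, smul_eq_mul, amp, of_apply]

lemma amp_smul (c : ℂ) (x : Matrix (Fin N × Fin n) (Fin N × Fin n) ℂ) :
    amp u (c • x) = c • amp u x := by
  ext I J
  exact congrFun₂ (map_smul u c (of fun i j => x (i, I.2) (j, J.2))) I.1 J.1

lemma amp_zero : amp u (0 : Matrix (Fin N × Fin n) (Fin N × Fin n) ℂ) = 0 := by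
  simpa using amp_smul u 0 (0 : Matrix (Fin N × Fin n) (Fin N × Fin n) ℂ)

end Amplification

section RegularNorm

variable {p q : ℝ≥0∞} {N m n : ℕ} {u : Matrix (Fin N) (Fin N) ℂ →ₗ[ℂ] Matrix (Fin m) (Fin m) ℂ}

lemma pisierNorm_amp_le_toReal_regNorm (hu : regNorm p u ≠ ∞)
    {x : Matrix (Fin N × Fin (n + 1)) (Fin N × Fin (n + 1)) ℂ} (hx : pisierNorm p x ≤ 1) :
    pisierNorm p (amp u x) ≤ (regNorm p u).toReal :=
  (ENNReal.ofReal_le_iff_le_toReal hu).1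
    (le_iSup_of_le n (le_iSup_of_le x (le_iSup_of_le hx le_rfl)))

lemma pisierNorm_amp_le (hu : regNorm p u ≠ ∞) (x : Matrix (Fin N × Fin n) (Fin N × Fin n) ℂ) :
    pisierNorm p (amp u x) ≤ pisierNorm p x * (regNorm p u).toReal := by
  rcases n with _ | n
  · have hx : amp u x = (0 : ℂ) • amp u x := Subsingleton.elim _ _
    rw [hx]
    refine (pisierNorm_smul_le 0 _).trans ?_
    simpa using mul_nonneg (pisierNorm_nonneg x) ENNReal.toReal_nonneg
  refine le_mul_of_forall_lt₀ fun t ht R hR => ?_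
  have ht0 : 0 < t := (pisierNorm_nonneg x).trans_lt ht
  have hx : pisierNorm p ((t : ℂ)⁻¹ • x) ≤ 1 := by
    refine (pisierNorm_smul_le _ x).trans ?_
    rw [norm_inv, Complex.norm_of_nonneg ht0.le]
    exact div_le_one_of_le₀ ht.le ht0.le
  calc pisierNorm p (amp u x) = pisierNorm p ((t : ℂ) • amp u ((t : ℂ)⁻¹ • x)) := by
        rw [← amp_smul, smul_inv_smul₀ (Complex.ofReal_ne_zero.2 ht0.ne')]
    _ ≤ pisierNorm p (amp u ((t : ℂ)⁻¹ • x)) * ‖(t : ℂ)‖ := pisierNorm_smul_le _ _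
    _ ≤ R * t := by
        rw [Complex.norm_of_nonneg ht0.le]
        gcongr
        exact (pisierNorm_amp_le_toReal_regNorm hu hx).trans hR.le
    _ = t * R := mul_comm R t

lemma norm_tracePair_amp_le [p.HolderConjugate q] (hu : regNorm p u ≠ ∞)
    (a : Matrix (Fin N × Fin m) (Fin N × Fin m) ℂ) :
    ‖tracePair (amp u a)‖ ≤ rho p q a * (regNorm p u).toReal := by
  refine le_rho_mul ENNReal.toReal_nonneg ?_
  rintro γ δ α β g rfl
  set x := (γ ⊗ₖ (1 : Matrix (Fin m) (Fin m) ℂ)) * g * (δ ⊗ₖ (1 : Matrix (Fin m) (Fin m) ℂ)) with hx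
  have hαβ : 0 ≤ schattenNorm (2 * q) α * schattenNorm (2 * q) β :=
    mul_nonneg (schattenNorm_nonneg _ α) (schattenNorm_nonneg _ β)
  calc ‖tracePair (amp u ((γ ⊗ₖ α) * g * (δ ⊗ₖ β)))‖
      = ‖tracePair (((1 : Matrix (Fin m) (Fin m) ℂ) ⊗ₖ α) * amp u x *
          ((1 : Matrix (Fin m) (Fin m) ℂ) ⊗ₖ β))‖ := by
        rw [← amp_one_kronecker_mul_mul, hx, one_kronecker_mul_kronecker_one_mul]
    _ ≤ pisierNorm p (amp u x) * (schattenNorm (2 * q) α * schattenNorm (2 * q) β) :=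
        norm_tracePair_one_kronecker_mul_mul_le p q α β (amp u x)
    _ ≤ schattenNorm (2 * p) γ * opNorm g * schattenNorm (2 * p) δ * (regNorm p u).toReal *
        (schattenNorm (2 * q) α * schattenNorm (2 * q) β) := by
        gcongr
        refine (pisierNorm_amp_le hu x).trans ?_
        gcongr
        exact pisierNorm_mul_mul_le γ δ g
    _ = _ := by ring

end RegularNorm

/-- The claim established in the proof of Theorem 3.2:
`|T((u ⊗ id_{M_m})(a))| ≤ ρ_p(a) · ‖u‖_r`. -/
theorem abs_trace_pairing_amp_le {n m : ℕ} (p q : ℝ≥0∞) (hp : 1 ≤ p) (hpq : p⁻¹ + q⁻¹ = 1)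
    (u : Matrix (Fin n) (Fin n) ℂ →ₗ[ℂ] Matrix (Fin m) (Fin m) ℂ)
    (a : Matrix (Fin n × Fin m) (Fin n × Fin m) ℂ) :
    ENNReal.ofReal ‖tracePair (amp (⇑u) a)‖ ≤ ENNReal.ofReal (rho p q a) * regNorm p (⇑u) := by
  have : p.HolderConjugate q := ENNReal.holderConjugate_iff.2 hpq
  rcases eq_or_ne (regNorm p u) ∞ with hu | hu
  · rcases (rho_nonneg p q a).eq_or_lt with ha | ha
    · rw [eq_zero_of_rho_eq_zero ha.symm, amp_zero]
      simp [tracePair]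
    · simp [hu, ENNReal.mul_top, ha]
  · rw [← ENNReal.ofReal_toReal hu, ← ENNReal.ofReal_mul (rho_nonneg p q a)]
    exact ENNReal.ofReal_le_ofReal (norm_tracePair_amp_le hu a)
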